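/- Fix 1 < B < ∞ and let F_2(B) be the set of irrational x ∈ [0,1) such that [1 ≤ a_n(x) ≤ B^n and a_{n+1}(x) ≥ B^n / a_n(x)] for infinitely many n ∈ ℕ, and a_{n+1}(x) < B^n for all sufficiently large n ∈ ℕ. Then the Hausdorff dimension of F_2(B) is at most t_B, where t_B = inf{ s ≥ 0 : lim_{n→∞} (1/n)·log( Σ_{(a_1,…,a_n)∈ℕ^n} B^{−n s²} · q_n(a_1,…,a_n)^{−2s} ) ≤ 0 }. -/

import Mathlib

/-!
Write `t_B` for the infimum on the right-hand side and `m = n + 1`. Fix `0 < s < 1`. If `x` lies in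
`F_2(B)`, then for infinitely many `m` one has `a_m a_{m+1} ≥ B^m`, and for each such `m` one of two
things happens:

* `a_m > B^{ms}`, so `T^n x < B^{-ms}`; or
* `a_m = a ≤ B^{ms}`, so `T^n x = 1 / (a + z)` with `0 ≤ z ≤ a / B^m`, which confines `T^n x` to a
  set of diameter at most `1 / (a B^m)`.

The inverse branch of `T^n` attached to `a_1 … a_n` is Lipschitz with constant `q_n^{-2}`
(`abs_cfBranch_sub_le`). Covering `F_2(B)` by the corresponding images costs, for each word
`a_1 … a_n`,
`q_n^{-2s} (B^{-ms²} + B^{-ms} Σ_{a ≤ B^{ms}} a^{-s}) ≤ (1 + 1/(1-s)) q_n^{-2s} B^{-ms²}`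
(`sum_gap_le`); the cut-off `B^{ms}` balances the two terms. Hence the cost at level `n` is at
most a constant times the sum `presSum B (s²) s n`, and geometric decay of these sums forces
`dim_H F_2(B) ≤ s` (`dimH_F2_le_of_decay`).

If the pressure at `s₀` is nonpositive and `s > s₀`, the factor `B^{-n(s² - s₀²)}` gives this
geometric decay at `s` (`presSum_decay`). For `s ≥ 1` the bound is trivial. Finally, the infimum
is not over the empty set: at `s = 1` the pressure exists and equals `-log B`, because the lengths
`1 / (q_n (q_n + q_{n-1}))` of the cylinders of level `n` add up to `1`, by a telescoping sum
(`tsum_length_eq_one`).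
-/

open Filter Topology MeasureTheory
open scoped ENNReal NNReal

/-- The Gauss map `T(x) = 1/x - ⌊1/x⌋` (with `T 0 = 0`). -/
noncomputable def gaussMap (x : ℝ) : ℝ := if x = 0 then 0 else 1 / x - ⌊1 / x⌋

/-- The `n`-th partial quotient `a_n(x) = ⌊1 / T^[n-1] x⌋` of the continued fraction
expansion of `x` (for `n ≥ 1`). -/
noncomputable def cfA (n : ℕ) (x : ℝ) : ℕ := ⌊1 / gaussMap^[n - 1] x⌋₊

/-- The continuant `q_n(a_1, …, a_n)`, defined by `q_{-1} = 0`, `q_0 = 1`,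
`q_k = a_k q_{k-1} + q_{k-2}`. -/
def contQ (l : List ℕ) : ℕ := (l.foldl (fun p a => (p.2, a * p.2 + p.1)) (0, 1)).2

/-- The continuant numerator `p_n(a_1, …, a_n)`, defined by `p_{-1} = 1`, `p_0 = 0`,
`p_k = a_k p_{k-1} + p_{k-2}`. -/
def contP (l : List ℕ) : ℕ := (l.foldl (fun p a => (p.2, a * p.2 + p.1)) (1, 0)).2

/-- `q_n(x) = q_n(a_1(x), …, a_n(x))`. -/
noncomputable def cfQ (x : ℝ) (n : ℕ) : ℕ := contQ (List.ofFn fun i : Fin n => cfA (i + 1) x)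

/-- `p_n(x) = p_n(a_1(x), …, a_n(x))`. -/
noncomputable def cfP (x : ℝ) (n : ℕ) : ℕ := contP (List.ofFn fun i : Fin n => cfA (i + 1) x)

/-- The sum `Σ_{(a_1,…,a_n) ∈ ℕ^n} B^{-n c} · q_n(a_1,…,a_n)^{-2 s}` over all `n`-tuples
of positive integers, computed in `ℝ≥0∞`. -/
noncomputable def presSum (B c s : ℝ) (n : ℕ) : ℝ≥0∞ :=
  ∑' a : Fin n → ℕ+,
    ENNReal.ofReal (B ^ (-(n : ℝ) * c) *
      (contQ (List.ofFn fun i => (a i : ℕ)) : ℝ) ^ (-2 * s))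

/-- `inf { s ≥ 0 : lim_{n→∞} (1/n) · log( Σ_{(a_1,…,a_n)∈ℕ^n} B^{-n·c(s)} q_n^{-2s} ) ≤ 0 }`,
where the limit is required to exist (in `EReal`) and be `≤ 0`. -/
noncomputable def presInf (B : ℝ) (c : ℝ → ℝ) : ℝ :=
  sInf {s : ℝ | 0 ≤ s ∧ ∃ P : EReal, P ≤ 0 ∧
    Tendsto (fun n : ℕ => (((n : ℝ)⁻¹ : ℝ) : EReal) * ENNReal.log (presSum B (c s) s n))
      atTop (nhds P)}

/-- The set `F_2(B)` of irrational `x ∈ [0,1)` such that `1 ≤ a_n(x) ≤ B^n` and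
`a_{n+1}(x) ≥ B^n / a_n(x)` for infinitely many `n`, and `a_{n+1}(x) < B^n` for all
sufficiently large `n`. -/
def F2 (B : ℝ) : Set ℝ :=
  {x | x ∈ Set.Ico (0 : ℝ) 1 ∧ Irrational x ∧
    (∃ᶠ n : ℕ in atTop, 1 ≤ cfA n x ∧ (cfA n x : ℝ) ≤ B ^ n ∧
      B ^ n / (cfA n x : ℝ) ≤ (cfA (n + 1) x : ℝ)) ∧
    (∀ᶠ n : ℕ in atTop, (cfA (n + 1) x : ℝ) < B ^ n)}

/-! ### Continuants and inverse branches -/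

/-- The pair `(q_{n-1}, q_n)` of the last two continuants of a word. -/
def contState (l : List ℕ) : ℕ × ℕ := l.foldl (fun p a => (p.2, a * p.2 + p.1)) (0, 1)

/-- The inverse branch `y ↦ [a_1, …, a_{n-1}, a_n + y]` of the `n`-th iterate of the Gauss map
attached to the word `a_1 … a_n`. -/
noncomputable def cfBranch (l : List ℕ) (y : ℝ) : ℝ := l.foldr (fun a t => 1 / ((a : ℝ) + t)) y

lemma contQ_eq (l : List ℕ) : contQ l = (contState l).2 := rfl

lemma contState_append (l : List ℕ) (a : ℕ) :
    contState (l ++ [a]) = ((contState l).2, a * (contState l).2 + (contState l).1) := by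
  simp [contState]

lemma cfBranch_append (l : List ℕ) (a : ℕ) (y : ℝ) :
    cfBranch (l ++ [a]) y = cfBranch l (1 / ((a : ℝ) + y)) := by
  simp [cfBranch]

lemma contState_bounds (l : List ℕ) (hl : ∀ a ∈ l, 1 ≤ a) :
    1 ≤ (contState l).2 ∧ (contState l).1 ≤ (contState l).2 := by
  induction l using List.reverseRecOn with
  | nil => simp [contState]
  | append_singleton l a ih =>
    have h1 := ih fun b hb => hl b (by simp [hb])
    have ha : 1 ≤ a := hl a (by simp)
    rw [contState_append]
    have := Nat.le_mul_of_pos_left (contState l).2 ha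
    constructor <;> dsimp only <;> omega

/-- The exact distortion of an inverse branch: it is a Möbius map of determinant `±1` with
denominator `q_n + y q_{n-1}`. -/
lemma abs_cfBranch_sub (l : List ℕ) (hl : ∀ a ∈ l, 1 ≤ a) (y z : ℝ) (hy : 0 ≤ y) (hz : 0 ≤ z) :
    |cfBranch l y - cfBranch l z| = |y - z| /
      (((contState l).2 + y * (contState l).1) * ((contState l).2 + z * (contState l).1)) := by
  induction l using List.reverseRecOn generalizing y z with
  | nil => simp [contState, cfBranch]
  | append_singleton l a ih =>
    have hl' : ∀ b ∈ l, 1 ≤ b := fun b hb => hl b (by simp [hb])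
    have ha : (1 : ℝ) ≤ a := by exact_mod_cast hl a (by simp)
    have hay : 0 < (a : ℝ) + y := by linarith
    have haz : 0 < (a : ℝ) + z := by linarith
    rw [cfBranch_append, cfBranch_append, ih hl' _ _ (by positivity) (by positivity),
      contState_append]
    have hq : (1 : ℝ) ≤ (contState l).2 := by exact_mod_cast (contState_bounds l hl').1
    have hq' : (0 : ℝ) ≤ (contState l).1 := by positivity
    have hsub : 1 / ((a : ℝ) + y) - 1 / (a + z) = -(y - z) / ((a + y) * (a + z)) := by
      field_simp; ring
    rw [hsub, abs_div, abs_neg, abs_of_pos (mul_pos hay haz)]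
    push_cast
    generalize ((contState l).2 : ℝ) = q at *
    generalize ((contState l).1 : ℝ) = q' at *
    have e1 : (a + y) * (q + 1 / (a + y) * q') = a * q + q' + y * q := by field_simp; ring
    have e2 : (a + z) * (q + 1 / (a + z) * q') = a * q + q' + z * q := by field_simp; ring
    rw [div_div, ← e1, ← e2]
    congr 1
    ring

lemma abs_cfBranch_sub_le (l : List ℕ) (hl : ∀ a ∈ l, 1 ≤ a) (y z : ℝ) (hy : 0 ≤ y)
    (hz : 0 ≤ z) : |cfBranch l y - cfBranch l z| ≤ |y - z| / (contQ l : ℝ) ^ 2 := by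
  rw [abs_cfBranch_sub l hl y z hy hz, contQ_eq]
  have hq : (1 : ℝ) ≤ (contState l).2 := by exact_mod_cast (contState_bounds l hl).1
  have h1 : ((contState l).2 : ℝ) ≤ (contState l).2 + y * (contState l).1 :=
    le_add_of_nonneg_right (by positivity)
  have h2 : ((contState l).2 : ℝ) ≤ (contState l).2 + z * (contState l).1 :=
    le_add_of_nonneg_right (by positivity)
  rw [sq]
  gcongr

lemma ofFn_pos {n : ℕ} (w : Fin n → ℕ+) : ∀ a ∈ List.ofFn (fun i => (w i : ℕ)), 1 ≤ a := by
  intro a ha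
  rw [List.mem_ofFn] at ha
  obtain ⟨i, rfl⟩ := ha
  exact (w i).pos

lemma contQ_ofFn_pos {n : ℕ} (w : Fin n → ℕ+) :
    (1 : ℝ) ≤ contQ (List.ofFn fun i => (w i : ℕ)) := by
  exact_mod_cast (contState_bounds _ (ofFn_pos w)).1

/-! ### The Gauss map on irrational points -/

lemma gaussMap_mem {y : ℝ} (hy : y ∈ Set.Ioo (0 : ℝ) 1) (hi : Irrational y) :
    gaussMap y ∈ Set.Ioo (0 : ℝ) 1 ∧ Irrational (gaussMap y) := by
  have h0 : y ≠ 0 := hy.1.ne'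
  have hirr : Irrational (gaussMap y) := by
    have h1 : Irrational (1 / y) := by simpa using hi.inv
    rw [gaussMap, if_neg h0]
    exact h1.sub_intCast _
  have hfr : gaussMap y = Int.fract (1 / y) := by rw [gaussMap, if_neg h0]; rfl
  refine ⟨⟨lt_of_le_of_ne ?_ hirr.ne_zero.symm, ?_⟩, hirr⟩
  · rw [hfr]; exact Int.fract_nonneg _
  · rw [hfr]; exact Int.fract_lt_one _

lemma iterate_gaussMap_mem {x : ℝ} (hx : x ∈ Set.Ico (0 : ℝ) 1) (hi : Irrational x) (n : ℕ) :
    gaussMap^[n] x ∈ Set.Ioo (0 : ℝ) 1 ∧ Irrational (gaussMap^[n] x) := by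
  induction n with
  | zero => exact ⟨⟨lt_of_le_of_ne hx.1 hi.ne_zero.symm, hx.2⟩, hi⟩
  | succ n ih =>
    rw [Function.iterate_succ_apply']
    exact gaussMap_mem ih.1 ih.2

lemma cfA_succ_pos {x : ℝ} (hx : x ∈ Set.Ico (0 : ℝ) 1) (hi : Irrational x) (n : ℕ) :
    1 ≤ cfA (n + 1) x := by
  obtain ⟨h, -⟩ := iterate_gaussMap_mem hx hi n
  rw [cfA, Nat.add_sub_cancel, Nat.one_le_floor_iff]
  rw [le_div_iff₀ h.1]
  linarith [h.2]

lemma iterate_gaussMap_eq {x : ℝ} (hx : x ∈ Set.Ico (0 : ℝ) 1) (hi : Irrational x) (n : ℕ) :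
    gaussMap^[n] x = 1 / ((cfA (n + 1) x : ℝ) + gaussMap^[n + 1] x) := by
  obtain ⟨h, -⟩ := iterate_gaussMap_mem hx hi n
  rw [Function.iterate_succ_apply', cfA, Nat.add_sub_cancel]
  generalize gaussMap^[n] x = y at h
  rw [gaussMap, if_neg h.1.ne', natCast_floor_eq_intCast_floor (by have := h.1; positivity)]
  simp

lemma iterate_gaussMap_le {x : ℝ} (hx : x ∈ Set.Ico (0 : ℝ) 1) (hi : Irrational x) (n : ℕ) :
    gaussMap^[n] x ≤ 1 / (cfA (n + 1) x : ℝ) := by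
  rw [iterate_gaussMap_eq hx hi n]
  have h1 : (1 : ℝ) ≤ cfA (n + 1) x := by exact_mod_cast cfA_succ_pos hx hi n
  have h2 := (iterate_gaussMap_mem hx hi (n + 1)).1.1
  gcongr
  linarith

lemma eq_cfBranch {x : ℝ} (hx : x ∈ Set.Ico (0 : ℝ) 1) (hi : Irrational x) (n : ℕ) :
    x = cfBranch (List.ofFn fun i : Fin n => cfA (i + 1) x) (gaussMap^[n] x) := by
  induction n with
  | zero => simp [cfBranch]
  | succ n ih =>
    rw [List.ofFn_succ_last, cfBranch_append]
    simp only [Fin.val_castSucc, Fin.val_last]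
    rw [← iterate_gaussMap_eq hx hi n]
    exact ih

/-! ### Elementary sums and the pressure at `s = 1` -/

lemma sum_rpow_neg_le (s : ℝ) (hs0 : 0 < s) (hs1 : s < 1) (N : ℕ) :
    ∑ a ∈ Finset.range N, ((a : ℝ) + 1) ^ (-s) ≤ (N : ℝ) ^ (1 - s) / (1 - s) := by
  have h1s : 0 < 1 - s := by linarith
  induction N with
  | zero => simp [Real.zero_rpow h1s.ne']
  | succ N ih =>
    rw [Finset.sum_range_succ]
    have hN : (0 : ℝ) < (N : ℝ) + 1 := by positivity
    -- Bernoulli: `N ^ (1 - s) = (N + 1) ^ (1 - s) * (1 - 1 / (N + 1)) ^ (1 - s)`.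
    have hb := rpow_one_add_le_one_add_mul_self (s := -(1 / ((N : ℝ) + 1))) (p := 1 - s)
      (by rw [neg_le_neg_iff, div_le_one hN]; linarith [Nat.cast_nonneg (α := ℝ) N])
      h1s.le (by linarith)
    have hfac : (N : ℝ) = ((N : ℝ) + 1) * (1 + -(1 / ((N : ℝ) + 1))) := by field_simp; ring
    have hnn : (0 : ℝ) ≤ 1 + -(1 / ((N : ℝ) + 1)) := by
      have : 1 / ((N : ℝ) + 1) ≤ 1 := by
        rw [div_le_one hN]; linarith [Nat.cast_nonneg (α := ℝ) N]
      linarith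
    have hpow : (N : ℝ) ^ (1 - s) ≤ ((N : ℝ) + 1) ^ (1 - s) - (1 - s) * ((N : ℝ) + 1) ^ (-s) := by
      calc (N : ℝ) ^ (1 - s)
          = ((N : ℝ) + 1) ^ (1 - s) * (1 + -(1 / ((N : ℝ) + 1))) ^ (1 - s) := by
            conv_lhs => rw [hfac]
            rw [Real.mul_rpow hN.le hnn]
        _ ≤ ((N : ℝ) + 1) ^ (1 - s) * (1 + (1 - s) * -(1 / ((N : ℝ) + 1))) := by gcongr
        _ = _ := by
            rw [show (1 - s) = 1 + -s by ring, Real.rpow_add hN, Real.rpow_one]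
            field_simp
            ring
    push_cast
    rw [le_div_iff₀ h1s] at ih ⊢
    nlinarith

/-- The lengths of the subcylinders of a cylinder add up: a telescoping series. -/
lemma tsum_cylinder_length (q q' : ℕ) (hq : 1 ≤ q) :
    ∑' a : ℕ+, ENNReal.ofReal (1 / (((a : ℕ) * q + q' : ℝ) * (((a : ℕ) * q + q') + q))) =
      ENNReal.ofReal (1 / ((q : ℝ) * (q + q'))) := by
  have hq1 : (1 : ℝ) ≤ q := by exact_mod_cast hq
  rw [tsum_pnat_eq_tsum_succ (f := fun a : ℕ =>
    ENNReal.ofReal (1 / (((a : ℕ) * q + q' : ℝ) * (((a : ℕ) * q + q') + q))))]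
  have hsum : HasSum (fun a : ℕ => 1 / ((((a + 1 : ℕ) : ℝ) * q + q') *
      ((((a + 1 : ℕ) : ℝ) * q + q') + q))) (1 / ((q : ℝ) * (q + q'))) := by
    rw [hasSum_iff_tendsto_nat_of_nonneg (fun i => by positivity)]
    have hpart : ∀ n : ℕ, ∑ a ∈ Finset.range n, 1 / ((((a + 1 : ℕ) : ℝ) * q + q') *
        ((((a + 1 : ℕ) : ℝ) * q + q') + q)) =
        1 / ((q : ℝ) * (q + q')) - 1 / q * (1 / ((n + 1) * q + q')) := by
      intro n
      induction n with
      | zero => simp; field_simp; simp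
      | succ n ih =>
        rw [Finset.sum_range_succ, ih]
        push_cast
        field_simp
        ring
    simp_rw [hpart]
    have hlim : Tendsto (fun n : ℕ => 1 / (((n : ℝ) + 1) * q + q')) atTop (𝓝 0) := by
      refine squeeze_zero (fun n => by positivity) (fun n => ?_)
        tendsto_one_div_add_atTop_nhds_zero_nat
      have : (0 : ℝ) ≤ q' := by positivity
      refine one_div_le_one_div_of_le (by positivity) ?_
      nlinarith [Nat.cast_nonneg (α := ℝ) n]
    simpa using (hlim.const_mul (1 / (q : ℝ))).const_sub (1 / ((q : ℝ) * (q + q')))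
  rw [← ENNReal.ofReal_tsum_of_nonneg (fun n => by positivity) hsum.summable, hsum.tsum_eq]

lemma tsum_length_eq_one (n : ℕ) :
    ∑' w : Fin n → ℕ+, ENNReal.ofReal (1 /
      (((contState (List.ofFn fun i => (w i : ℕ))).2 : ℝ) *
        ((contState (List.ofFn fun i => (w i : ℕ))).2 +
          (contState (List.ofFn fun i => (w i : ℕ))).1))) = 1 := by
  induction n with
  | zero => simp [contState]
  | succ n ih =>
    rw [← (Fin.snocEquiv (fun _ : Fin (n + 1) => ℕ+)).tsum_eq]
    rw [← (Equiv.prodComm (Fin n → ℕ+) ℕ+).tsum_eq]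
    simp only [Equiv.prodComm_apply, Fin.snocEquiv, Equiv.coe_fn_mk, List.ofFn_succ_last,
      Fin.snoc_castSucc, Fin.snoc_last, contState_append, Prod.fst_swap, Prod.snd_swap]
    rw [ENNReal.tsum_prod (f := fun (w : Fin n → ℕ+) (a : ℕ+) => ENNReal.ofReal (1 /
      (((((a : ℕ) * (contState (List.ofFn fun i => (w i : ℕ))).2 +
        (contState (List.ofFn fun i => (w i : ℕ))).1 : ℕ) : ℝ)) *
        (((a : ℕ) * (contState (List.ofFn fun i => (w i : ℕ))).2 +
        (contState (List.ofFn fun i => (w i : ℕ))).1 : ℕ) +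
          (contState (List.ofFn fun i => (w i : ℕ))).2))))]
    rw [← ih]
    refine tsum_congr fun w => ?_
    have := tsum_cylinder_length (contState (List.ofFn fun i => (w i : ℕ))).2
      (contState (List.ofFn fun i => (w i : ℕ))).1 (contState_bounds _ (ofFn_pos w)).1
    rw [← this]
    push_cast
    rfl

lemma presSum_one_bounds (B : ℝ) (hB : 1 < B) (n : ℕ) :
    ENNReal.ofReal (B ^ (-(n : ℝ))) ≤ presSum B 1 1 n ∧
      presSum B 1 1 n ≤ ENNReal.ofReal (B ^ (-(n : ℝ)) * 2) := by
  have hB0 : 0 < B := by linarith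
  have hBn : 0 < B ^ (-(n : ℝ)) := Real.rpow_pos_of_pos hB0 _
  have hmul : presSum B 1 1 n = ENNReal.ofReal (B ^ (-(n : ℝ))) *
      ∑' w : Fin n → ℕ+, ENNReal.ofReal
        (1 / (contQ (List.ofFn fun i => (w i : ℕ)) : ℝ) ^ 2) := by
    rw [presSum, ← ENNReal.tsum_mul_left]
    refine tsum_congr fun w => ?_
    rw [← ENNReal.ofReal_mul hBn.le]
    have := contQ_ofFn_pos w
    rw [mul_one, mul_one, Real.rpow_neg (by linarith)]
    norm_num
  have hone := tsum_length_eq_one n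
  rw [hmul, ENNReal.ofReal_mul hBn.le]
  constructor
  · conv_lhs => rw [← mul_one (ENNReal.ofReal _), ← hone]
    gcongr _ * ?_
    refine ENNReal.tsum_le_tsum fun w => ?_
    have := contQ_ofFn_pos w
    rw [contQ_eq] at this ⊢
    refine ENNReal.ofReal_le_ofReal (one_div_le_one_div_of_le (by positivity) ?_)
    nlinarith [Nat.cast_nonneg (α := ℝ) (contState (List.ofFn fun i => (w i : ℕ))).1]
  · gcongr _ * ?_
    calc _ ≤ ∑' w : Fin n → ℕ+, ENNReal.ofReal 2 * ENNReal.ofReal (1 /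
      (((contState (List.ofFn fun i => (w i : ℕ))).2 : ℝ) *
        ((contState (List.ofFn fun i => (w i : ℕ))).2 +
          (contState (List.ofFn fun i => (w i : ℕ))).1))) := by
          refine ENNReal.tsum_le_tsum fun w => ?_
          rw [← ENNReal.ofReal_mul (by norm_num)]
          apply ENNReal.ofReal_le_ofReal
          have h1 := contQ_ofFn_pos w
          have h2 : ((contState (List.ofFn fun i => (w i : ℕ))).1 : ℝ) ≤
            (contState (List.ofFn fun i => (w i : ℕ))).2 := by
            exact_mod_cast (contState_bounds _ (ofFn_pos w)).2
          rw [contQ_eq] at h1 ⊢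
          have h3 : (0 : ℝ) ≤ (contState (List.ofFn fun i => (w i : ℕ))).1 := by positivity
          rw [mul_one_div, div_le_div_iff₀ (by positivity) (by positivity)]
          nlinarith
      _ = _ := by rw [ENNReal.tsum_mul_left, hone, mul_one]

/-- At `s = 1` the pressure is `-log B`, so the set defining `t_B` contains `1`. -/
lemma tendsto_pressure_one (B : ℝ) (hB : 1 < B) :
    Tendsto (fun n : ℕ => (((n : ℝ)⁻¹ : ℝ) : EReal) * ENNReal.log (presSum B 1 1 n))
      atTop (nhds ((-Real.log B : ℝ) : EReal)) := by
  have hB0 : 0 < B := by linarith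
  have hup : Tendsto (fun n : ℕ => ((-Real.log B + Real.log 2 * (n : ℝ)⁻¹ : ℝ) : EReal))
      atTop (nhds ((-Real.log B : ℝ) : EReal)) := by
    refine (continuous_coe_real_ereal.tendsto _).comp ?_
    simpa using (tendsto_inv_atTop_nhds_zero_nat (𝕜 := ℝ)).const_mul (Real.log 2)
      |>.const_add (-Real.log B)
  refine tendsto_of_tendsto_of_tendsto_of_le_of_le' tendsto_const_nhds hup ?_ ?_
  · filter_upwards [eventually_gt_atTop 0] with n hn
    have hn' : (0 : ℝ) < n := by exact_mod_cast hn
    have h := ENNReal.log_le_log (presSum_one_bounds B hB n).1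
    rw [ENNReal.log_ofReal_of_pos (Real.rpow_pos_of_pos hB0 _), Real.log_rpow hB0] at h
    calc ((-Real.log B : ℝ) : EReal)
        = (((n : ℝ)⁻¹ : ℝ) : EReal) * ((-(n : ℝ) * Real.log B : ℝ) : EReal) := by
          rw [← EReal.coe_mul]; congr 1; field_simp
      _ ≤ _ := mul_le_mul_of_nonneg_left h (by exact_mod_cast (inv_pos.2 hn').le)
  · filter_upwards [eventually_gt_atTop 0] with n hn
    have hn' : (0 : ℝ) < n := by exact_mod_cast hn
    have h := ENNReal.log_le_log (presSum_one_bounds B hB n).2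
    have hp := Real.rpow_pos_of_pos hB0 (-(n : ℝ))
    rw [ENNReal.log_ofReal_of_pos (by positivity), Real.log_mul hp.ne' (by norm_num),
      Real.log_rpow hB0] at h
    calc _ ≤ (((n : ℝ)⁻¹ : ℝ) : EReal) * ((-(n : ℝ) * Real.log B + Real.log 2 : ℝ) : EReal) :=
          mul_le_mul_of_nonneg_left h (by exact_mod_cast (inv_pos.2 hn').le)
      _ = _ := by rw [← EReal.coe_mul]; congr 1; field_simp

/-! ### The covering -/

/-- The length of the `i`-th piece of the parameter interval used to cover, inside the cylinder
of a word of length `n`, the points with `a_{n+1} a_{n+2} ≥ B^(n+1)`: the piece `i = 0` takes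
care of all large values of `a_{n+1}` at once, the piece `i ≥ 1` of the value `a_{n+1} = i`. -/
noncomputable def gap (B s : ℝ) (n i : ℕ) : ℝ :=
  if i = 0 then B ^ (-((n : ℝ) + 1) * s) else 1 / ((i : ℝ) * B ^ ((n : ℝ) + 1))

/-- The covering set attached to the word `w` of length `n` and the index `i`: the points
`[w_1, …, w_n + y]` with `y ≤ B^(-(n+1)s)` for `i = 0`, and those with `y = 1 / (i + z)`,
`z ≤ i / B^(n+1)`, for `i ≥ 1`. -/
noncomputable def coverSet (B s : ℝ) {n : ℕ} (w : Fin n → ℕ+) (i : ℕ) : Set ℝ :=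
  cfBranch (List.ofFn fun j => (w j : ℕ)) ''
    (if i = 0 then Set.Icc 0 (B ^ (-((n : ℝ) + 1) * s))
      else (fun z : ℝ => 1 / ((i : ℝ) + z)) '' Set.Icc 0 ((i : ℝ) / B ^ ((n : ℝ) + 1)))

lemma gap_nonneg (B s : ℝ) (hB : 1 < B) (n i : ℕ) : 0 ≤ gap B s n i := by
  have hB0 : 0 < B := by linarith
  unfold gap
  split_ifs <;> positivity

lemma gap_le (B s : ℝ) (hB : 1 < B) (hs0 : 0 < s) (hs1 : s < 1) (n i : ℕ) :
    gap B s n i ≤ B ^ (-((n : ℝ) + 1) * s) := by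
  have hB0 : 0 < B := by linarith
  unfold gap
  split_ifs with h
  · exact le_rfl
  · have hi : (1 : ℝ) ≤ i := by exact_mod_cast Nat.one_le_iff_ne_zero.2 h
    have hp := Real.rpow_pos_of_pos hB0 ((n : ℝ) + 1)
    calc 1 / ((i : ℝ) * B ^ ((n : ℝ) + 1)) ≤ 1 / B ^ ((n : ℝ) + 1) :=
          one_div_le_one_div_of_le hp (by nlinarith)
      _ = B ^ (-((n : ℝ) + 1)) := by rw [Real.rpow_neg hB0.le, one_div]
      _ ≤ _ := by
          apply Real.rpow_le_rpow_of_exponent_le hB.le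
          nlinarith [Nat.cast_nonneg (α := ℝ) n]

lemma abs_sub_le_of_mem_Icc {δ y z : ℝ} (hy : y ∈ Set.Icc 0 δ) (hz : z ∈ Set.Icc 0 δ) :
    |y - z| ≤ δ := by
  rw [abs_le]; constructor <;> linarith [hy.1, hy.2, hz.1, hz.2]

lemma ediam_coverSet_le (B s : ℝ) (hB : 1 < B) {n : ℕ} (w : Fin n → ℕ+) (i : ℕ) :
    Metric.ediam (coverSet B s w i) ≤
      ENNReal.ofReal (gap B s n i / (contQ (List.ofFn fun j => (w j : ℕ)) : ℝ) ^ 2) := by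
  have hB0 : 0 < B := by linarith
  have hp := Real.rpow_pos_of_pos hB0 ((n : ℝ) + 1)
  refine Metric.ediam_le ?_
  rintro _ ⟨y, hy, rfl⟩ _ ⟨z, hz, rfl⟩
  rw [edist_dist, Real.dist_eq]
  apply ENNReal.ofReal_le_ofReal
  suffices h : 0 ≤ y ∧ 0 ≤ z ∧ |y - z| ≤ gap B s n i by
    refine (abs_cfBranch_sub_le _ (ofFn_pos w) y z h.1 h.2.1).trans ?_
    gcongr
    exact h.2.2
  unfold gap
  by_cases h : i = 0
  · simp only [h, if_true] at hy hz ⊢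
    exact ⟨hy.1, hz.1, abs_sub_le_of_mem_Icc hy hz⟩
  · simp only [h, if_false] at hy hz ⊢
    have hi : (1 : ℝ) ≤ i := by exact_mod_cast Nat.one_le_iff_ne_zero.2 h
    obtain ⟨u, hu, rfl⟩ := hy
    obtain ⟨v, hv, rfl⟩ := hz
    have hu0 := hu.1
    have hv0 := hv.1
    refine ⟨by positivity, by positivity, ?_⟩
    have hsub : 1 / ((i : ℝ) + u) - 1 / (i + v) = -(u - v) / ((i + u) * (i + v)) := by
      field_simp; ring
    have hden : 0 < ((i : ℝ) + u) * (i + v) := by positivity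
    dsimp only
    rw [hsub, abs_div, abs_neg, abs_of_pos hden]
    calc |u - v| / (((i : ℝ) + u) * (i + v)) ≤ (i / B ^ ((n : ℝ) + 1)) / ((i : ℝ) * i) := by
          gcongr
          · exact abs_sub_le_of_mem_Icc hu hv
          · linarith
          · linarith
      _ = _ := by field_simp

/-- The cost of covering one cylinder. The exponent `s` in the cut-off `B^((n+1)s)` makes the two
contributions equal, both giving the factor `B^(-(n+1)s²)`. -/
lemma sum_gap_le (B s : ℝ) (hB : 1 < B) (hs0 : 0 < s) (hs1 : s < 1) (n : ℕ) (q : ℝ)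
    (hq : 1 ≤ q) :
    ∑ i ∈ Finset.range (⌊B ^ (((n : ℝ) + 1) * s)⌋₊ + 1), (gap B s n i / q ^ 2) ^ s ≤
      (1 / (1 - s) + 1) * (B ^ (-(n : ℝ) * s ^ 2) * q ^ (-2 * s)) := by
  have hB0 : 0 < B := by linarith
  have h1s : 0 < 1 - s := by linarith
  have hq0 : 0 < q := by linarith
  have hp := Real.rpow_pos_of_pos hB0 ((n : ℝ) + 1)
  have hqs : (q ^ 2) ^ s = (q ^ (-2 * s))⁻¹ := by
    rw [← Real.rpow_natCast, ← Real.rpow_mul hq0.le, ← Real.rpow_neg hq0.le]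
    congr 1
    push_cast; ring
  have hterm : ∀ i, (gap B s n i / q ^ 2) ^ s = gap B s n i ^ s * q ^ (-2 * s) := by
    intro i
    rw [Real.div_rpow (gap_nonneg B s hB n i) (by positivity), hqs, div_inv_eq_mul]
  simp_rw [hterm]
  rw [← Finset.sum_mul, ← mul_assoc]
  refine mul_le_mul_of_nonneg_right ?_ (by positivity)
  have h0 : gap B s n 0 ^ s = B ^ (-((n : ℝ) + 1) * s ^ 2) := by
    rw [gap, if_pos rfl, ← Real.rpow_mul hB0.le]
    congr 1; ring
  have hi : ∀ i : ℕ, gap B s n (i + 1) ^ s =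
      B ^ (-((n : ℝ) + 1) * s) * ((i : ℝ) + 1) ^ (-s) := by
    intro i
    rw [gap, if_neg (Nat.succ_ne_zero i), one_div, Real.inv_rpow (by positivity),
      ← Real.rpow_neg (by positivity), Real.mul_rpow (by positivity) hp.le,
      ← Real.rpow_mul hB0.le, mul_comm]
    push_cast
    congr 2; ring
  rw [Finset.sum_range_succ', h0]
  simp_rw [hi]
  rw [← Finset.mul_sum]
  have hX : 0 ≤ B ^ (((n : ℝ) + 1) * s) := by positivity
  have hsum : ∑ i ∈ Finset.range ⌊B ^ (((n : ℝ) + 1) * s)⌋₊, ((i : ℝ) + 1) ^ (-s) ≤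
      (B ^ (((n : ℝ) + 1) * s)) ^ (1 - s) / (1 - s) := by
    refine (sum_rpow_neg_le s hs0 hs1 _).trans ?_
    gcongr
    exact Nat.floor_le hX
  have hexp : B ^ (-((n : ℝ) + 1) * s) * ((B ^ (((n : ℝ) + 1) * s)) ^ (1 - s) / (1 - s)) =
      1 / (1 - s) * B ^ (-((n : ℝ) + 1) * s ^ 2) := by
    rw [← Real.rpow_mul hB0.le, mul_div_assoc', ← Real.rpow_add hB0, one_div,
      inv_mul_eq_div]
    congr 2; ring
  have hdrop : B ^ (-((n : ℝ) + 1) * s ^ 2) ≤ B ^ (-(n : ℝ) * s ^ 2) := by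
    apply Real.rpow_le_rpow_of_exponent_le hB.le
    nlinarith [sq_nonneg s]
  calc _ ≤ B ^ (-((n : ℝ) + 1) * s) * ((B ^ (((n : ℝ) + 1) * s)) ^ (1 - s) / (1 - s)) +
        B ^ (-((n : ℝ) + 1) * s ^ 2) := by gcongr
    _ = (1 / (1 - s) + 1) * B ^ (-((n : ℝ) + 1) * s ^ 2) := by rw [hexp]; ring
    _ ≤ _ := by gcongr

lemma F2_subset_cover (B s : ℝ) (hB : 1 < B) (N : ℕ) {x : ℝ} (hx : x ∈ F2 B) :
    ∃ k : ℕ, ∃ w : Fin (k + N) → ℕ+, ∃ i < ⌊B ^ ((((k + N : ℕ) : ℝ) + 1) * s)⌋₊ + 1,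
      x ∈ coverSet B s w i := by
  have hB0 : 0 < B := by linarith
  obtain ⟨hI, hirr, hfreq, -⟩ := hx
  obtain ⟨m, hm, -, -, hprod⟩ := (frequently_atTop.1 hfreq) (N + 1)
  obtain ⟨k, rfl⟩ : ∃ k, m = k + N + 1 := ⟨m - (N + 1), by omega⟩
  refine ⟨k, fun j => ⟨cfA (j + 1) x, cfA_succ_pos hI hirr j⟩, ?_⟩
  set n := k + N
  have hxb := eq_cfBranch hI hirr n
  have ha : (1 : ℝ) ≤ cfA (n + 1) x := by exact_mod_cast cfA_succ_pos hI hirr n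
  have hb : (1 : ℝ) ≤ cfA (n + 1 + 1) x := by exact_mod_cast cfA_succ_pos hI hirr (n + 1)
  have hy0 := (iterate_gaussMap_mem hI hirr n).1.1
  have hz0 := (iterate_gaussMap_mem hI hirr (n + 1)).1.1
  have hyle := iterate_gaussMap_le hI hirr n
  have hzle := iterate_gaussMap_le hI hirr (n + 1)
  by_cases hlarge : (cfA (n + 1) x : ℝ) ≤ B ^ (((n : ℝ) + 1) * s)
  · refine ⟨cfA (n + 1) x, Nat.lt_succ_of_le (Nat.le_floor hlarge), gaussMap^[n] x, ?_, ?_⟩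
    · rw [if_neg (Nat.one_le_iff_ne_zero.1 (cfA_succ_pos hI hirr n))]
      refine ⟨gaussMap^[n + 1] x, ⟨hz0.le, ?_⟩, (iterate_gaussMap_eq hI hirr n).symm⟩
      refine hzle.trans ?_
      have hcast : B ^ ((n : ℝ) + 1) = B ^ (n + 1) := by
        rw [← Real.rpow_natCast]; push_cast; rfl
      rw [hcast, div_le_div_iff₀ (by linarith) (by positivity)]
      rw [div_le_iff₀ (by linarith)] at hprod
      linarith
    · exact hxb.symm
  · refine ⟨0, Nat.succ_pos _, gaussMap^[n] x, ?_, hxb.symm⟩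
    rw [if_pos rfl]
    refine ⟨hy0.le, hyle.trans ?_⟩
    rw [neg_mul, Real.rpow_neg hB0.le, ← one_div]
    exact one_div_le_one_div_of_le (by positivity) (not_le.1 hlarge).le

/-- Geometric decay of the level sums bounds the dimension: the tails of the coverings have
vanishing total `s`-dimensional cost. -/
lemma dimH_F2_le_of_decay (B s : ℝ) (hB : 1 < B) (hs0 : 0 < s) (hs1 : s < 1) (r : ℝ≥0∞)
    (hr : r < 1) (h : ∀ᶠ n : ℕ in atTop, presSum B (s ^ 2) s n ≤ r ^ n) :
    dimH (F2 B) ≤ ENNReal.ofReal s := by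
  have hB0 : 0 < B := by linarith
  have h1s : 0 < 1 - s := by linarith
  set C : ℝ := 1 / (1 - s) + 1 with hC
  have hC0 : 0 ≤ C := by positivity
  let M : ℕ → ℕ := fun n => ⌊B ^ (((n : ℝ) + 1) * s)⌋₊ + 1
  let t : ∀ N : ℕ, (Σ k : ℕ, (Fin (k + N) → ℕ+) × Fin (M (k + N))) → Set ℝ :=
    fun N p => coverSet B s p.2.1 p.2.2
  have hcost : ∀ N, ∑' p, Metric.ediam (t N p) ^ s ≤
      ENNReal.ofReal C * ∑' k, presSum B (s ^ 2) s (k + N) := by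
    intro N
    rw [ENNReal.tsum_sigma', ← ENNReal.tsum_mul_left]
    refine ENNReal.tsum_le_tsum fun k => ?_
    rw [presSum, ← ENNReal.tsum_mul_left]
    rw [ENNReal.tsum_prod (f := fun (w : Fin (k + N) → ℕ+) (i : Fin (M (k + N))) =>
      Metric.ediam (coverSet B s w i) ^ s)]
    refine ENNReal.tsum_le_tsum fun w => ?_
    have hq := contQ_ofFn_pos w
    rw [tsum_fintype, ← ENNReal.ofReal_mul hC0]
    have hgn := fun i => gap_nonneg B s hB (k + N) i
    calc ∑ i : Fin (M (k + N)), Metric.ediam (coverSet B s w i) ^ s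
        ≤ ∑ i : Fin (M (k + N)), ENNReal.ofReal ((gap B s (k + N) i /
            (contQ (List.ofFn fun j => (w j : ℕ)) : ℝ) ^ 2) ^ s) := by
          refine Finset.sum_le_sum fun i _ => ?_
          rw [← ENNReal.ofReal_rpow_of_nonneg (div_nonneg (hgn i) (by positivity)) hs0.le]
          exact ENNReal.rpow_le_rpow (ediam_coverSet_le B s hB w i) hs0.le
      _ = ENNReal.ofReal (∑ i ∈ Finset.range (M (k + N)), (gap B s (k + N) i /
            (contQ (List.ofFn fun j => (w j : ℕ)) : ℝ) ^ 2) ^ s) := by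
          rw [Fin.sum_univ_eq_sum_range (fun i => ENNReal.ofReal ((gap B s (k + N) i /
            (contQ (List.ofFn fun j => (w j : ℕ)) : ℝ) ^ 2) ^ s)),
            ENNReal.ofReal_sum_of_nonneg]
          intro i _
          exact Real.rpow_nonneg (div_nonneg (hgn i) (by positivity)) _
      _ ≤ _ := ENNReal.ofReal_le_ofReal (sum_gap_le B s hB hs0 hs1 (k + N) _ hq)
  have hgeom : Tendsto (fun N => ENNReal.ofReal C * ∑' k, r ^ (k + N)) atTop (𝓝 0) := by
    have h1 : ∑' k : ℕ, r ^ k ≠ ∞ := by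
      rw [ENNReal.tsum_geometric]
      exact ENNReal.inv_ne_top.2 (tsub_pos_of_lt hr).ne'
    simpa using ENNReal.Tendsto.const_mul (ENNReal.tendsto_sum_nat_add _ h1)
      (Or.inr (ENNReal.ofReal_ne_top (r := C)))
  have hzero : Tendsto (fun N => ∑' p, Metric.ediam (t N p) ^ s) atTop (𝓝 0) := by
    refine tendsto_of_tendsto_of_tendsto_of_le_of_le' tendsto_const_nhds hgeom
      (Eventually.of_forall fun _ => zero_le) ?_
    obtain ⟨N₀, hN₀⟩ := eventually_atTop.1 h
    filter_upwards [eventually_ge_atTop N₀] with N hN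
    refine (hcost N).trans ?_
    gcongr _ * ?_
    exact ENNReal.tsum_le_tsum fun k => hN₀ _ (by omega)
  have hdiam : ∀ N p, Metric.ediam (t N p) ≤ ENNReal.ofReal (B ^ (-s)) ^ N := by
    rintro N ⟨k, w, i⟩
    refine (ediam_coverSet_le B s hB w i).trans ?_
    have hq := contQ_ofFn_pos w
    rw [← ENNReal.ofReal_pow (by positivity)]
    apply ENNReal.ofReal_le_ofReal
    refine (div_le_self (gap_nonneg B s hB _ _) (one_le_pow₀ hq)).trans ?_
    refine (gap_le B s hB hs0 hs1 _ _).trans ?_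
    rw [← Real.rpow_natCast, ← Real.rpow_mul hB0.le]
    apply Real.rpow_le_rpow_of_exponent_le hB.le
    push_cast
    nlinarith [mul_nonneg hs0.le (Nat.cast_nonneg (α := ℝ) k)]
  have hrad : Tendsto (fun N => ENNReal.ofReal (B ^ (-s)) ^ N) atTop (𝓝 0) := by
    apply ENNReal.tendsto_pow_atTop_nhds_zero_of_lt_one
    rw [ENNReal.ofReal_lt_one]
    exact Real.rpow_lt_one_of_one_lt_of_neg hB (by linarith)
  have hcover : ∀ N, F2 B ⊆ ⋃ p, t N p := by
    intro N x hx
    obtain ⟨k, w, i, hi, hmem⟩ := F2_subset_cover B s hB N hx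
    exact Set.mem_iUnion.2 ⟨⟨k, w, ⟨i, hi⟩⟩, hmem⟩
  have hmeas := Measure.hausdorffMeasure_le_liminf_tsum s (F2 B) _ hrad t
    (Eventually.of_forall hdiam) (Eventually.of_forall hcover)
  rw [hzero.liminf_eq] at hmeas
  refine dimH_le_of_hausdorffMeasure_ne_top (d := s.toNNReal) ?_
  rw [Real.coe_toNNReal s hs0.le]
  exact ne_top_of_le_ne_top ENNReal.zero_ne_top hmeas

/-! ### From nonpositive pressure to the dimension bound -/

/-- If the pressure at `s₀` is nonpositive, the level sums at any `s > s₀` decay geometrically: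
the factor `B^(-n s²)` alone provides the gain. -/
lemma presSum_decay (B s₀ s : ℝ) (hB : 1 < B) (hs₀ : 0 ≤ s₀) (hs : s₀ < s) (P : EReal)
    (hP : P ≤ 0)
    (hlim : Tendsto (fun n : ℕ => (((n : ℝ)⁻¹ : ℝ) : EReal) *
      ENNReal.log (presSum B (s₀ ^ 2) s₀ n)) atTop (nhds P)) :
    ∃ r : ℝ≥0∞, r < 1 ∧ ∀ᶠ n : ℕ in atTop, presSum B (s ^ 2) s n ≤ r ^ n := by
  have hB0 : 0 < B := by linarith
  set δ : ℝ := s ^ 2 - s₀ ^ 2 with hδ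
  have hδ0 : 0 < δ := by rw [hδ]; nlinarith
  have hlog := Real.log_pos hB
  refine ⟨ENNReal.ofReal (B ^ (-(δ / 2))), ?_, ?_⟩
  · rw [ENNReal.ofReal_lt_one]
    exact Real.rpow_lt_one_of_one_lt_of_neg hB (by linarith)
  have hε : P < ((δ / 2 * Real.log B : ℝ) : EReal) :=
    hP.trans_lt (by exact_mod_cast (by positivity : 0 < δ / 2 * Real.log B))
  filter_upwards [hlim.eventually (gt_mem_nhds hε), eventually_gt_atTop 0] with n hn hn0
  have hn0' : n ≠ 0 := hn0.ne'
  have hbase : presSum B (s₀ ^ 2) s₀ n ≤ ENNReal.ofReal (B ^ (δ / 2)) ^ n := by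
    rw [← Real.log_rpow hB0,
      ← ENNReal.log_ofReal_of_pos (Real.rpow_pos_of_pos hB0 _), ← ENNReal.log_rpow,
      ENNReal.log_lt_log_iff] at hn
    calc presSum B (s₀ ^ 2) s₀ n = (presSum B (s₀ ^ 2) s₀ n ^ ((n : ℝ)⁻¹)) ^ n := by
          rw [← ENNReal.rpow_natCast, ← ENNReal.rpow_mul,
            inv_mul_cancel₀ (by exact_mod_cast hn0'), ENNReal.rpow_one]
      _ ≤ _ := by gcongr
  calc presSum B (s ^ 2) s n
      ≤ ENNReal.ofReal (B ^ (-(n : ℝ) * δ)) * presSum B (s₀ ^ 2) s₀ n := by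
        rw [presSum, presSum, ← ENNReal.tsum_mul_left]
        refine ENNReal.tsum_le_tsum fun w => ?_
        have hq := contQ_ofFn_pos w
        rw [← ENNReal.ofReal_mul (by positivity)]
        apply ENNReal.ofReal_le_ofReal
        rw [← mul_assoc, ← Real.rpow_add hB0]
        have e : -(n : ℝ) * δ + -(n : ℝ) * s₀ ^ 2 = -(n : ℝ) * s ^ 2 := by rw [hδ]; ring
        rw [e]
        gcongr _ * ?_
        exact Real.rpow_le_rpow_of_exponent_le hq (by linarith)
    _ ≤ ENNReal.ofReal (B ^ (-(n : ℝ) * δ)) * ENNReal.ofReal (B ^ (δ / 2)) ^ n := by gcongr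
    _ = ENNReal.ofReal (B ^ (-(δ / 2))) ^ n := by
        rw [← ENNReal.ofReal_pow (by positivity), ← ENNReal.ofReal_pow (by positivity),
          ← ENNReal.ofReal_mul (by positivity), ← Real.rpow_natCast, ← Real.rpow_natCast,
          ← Real.rpow_mul hB0.le, ← Real.rpow_mul hB0.le, ← Real.rpow_add hB0]
        congr 2
        ring

lemma dimH_F2_le_one (B : ℝ) : dimH (F2 B) ≤ 1 :=
  (dimH_mono (Set.subset_univ _)).trans Real.dimH_univ.le

lemma dimH_F2_le_of_pressure (B s₀ : ℝ) (hB : 1 < B) (hs₀ : 0 ≤ s₀) (P : EReal) (hP : P ≤ 0)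
    (hlim : Tendsto (fun n : ℕ => (((n : ℝ)⁻¹ : ℝ) : EReal) *
      ENNReal.log (presSum B (s₀ ^ 2) s₀ n)) atTop (nhds P)) :
    (dimH (F2 B)).toReal ≤ s₀ := by
  have h1 := dimH_F2_le_one B
  refine le_of_forall_gt_imp_ge_of_dense fun s hs => ?_
  have hs0 : 0 < s := hs₀.trans_lt hs
  refine ENNReal.toReal_le_of_le_ofReal hs0.le ?_
  rcases lt_or_ge s 1 with hs1 | hs1
  · obtain ⟨r, hr, hdec⟩ := presSum_decay B s₀ s hB hs₀ hs P hP hlim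
    exact dimH_F2_le_of_decay B s hB hs0 hs1 r hr hdec
  · exact h1.trans (by simpa using ENNReal.ofReal_le_ofReal hs1)

theorem dimH_F2_le_tB (B : ℝ) (hB : 1 < B) :
    dimH (F2 B) ≤ ENNReal.ofReal (presInf B (fun s => s ^ 2)) := by
  have hfin : dimH (F2 B) ≠ ∞ := ne_top_of_le_ne_top ENNReal.one_ne_top (dimH_F2_le_one B)
  rw [← ENNReal.ofReal_toReal hfin]
  apply ENNReal.ofReal_le_ofReal
  refine le_csInf ⟨1, zero_le_one, ((-Real.log B : ℝ) : EReal), ?_, ?_⟩ ?_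
  · exact_mod_cast (neg_neg_of_pos (Real.log_pos hB)).le
  · simpa using tendsto_pressure_one B hB
  · rintro s ⟨hs, P, hP, hlim⟩
    exact dimH_F2_le_of_pressure B s hB hs P hP hlim
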